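/- For all real numbers u > 0 and c > 0, one has (c/√(2π)) · ∫₀^∞ s^{-1/2} · exp(−(u + c·s)²/(2s)) ds = exp(−2·u·c), where the integral is the Lebesgue integral over (0,∞). -/

import Mathlib

open MeasureTheory Real

/-!
Completing the square, `p * x ^ 2 + q / x ^ 2 = (√p * x - √q / x) ^ 2 + 2 * √(p * q)`. The map
`x ↦ a * x - b / x` is an increasing bijection from `(0, ∞)` onto `ℝ` with derivative
`a + b / x ^ 2`, and the involution `x ↦ b / (a * x)` of `(0, ∞)` reverses its sign while exchanging
the measures `a dx` and `(b / x ^ 2) dx`. An even function of `a * x - b / x` therefore has the same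
integral against both, namely half its integral over `ℝ`, and `∫₀^∞ exp (-(p * x ^ 2 + q / x ^ 2))`
reduces to a Gaussian integral. The substitution `s = x ^ 2` brings the density of the Brownian
motion with drift into this form.
-/

section CauchySchlomilch

open Set

variable {E : Type*} [NormedAddCommGroup E] [NormedSpace ℝ E] {a b : ℝ}

lemma hasDerivAt_mul_sub_div (a b : ℝ) {x : ℝ} (hx : x ≠ 0) :
    HasDerivAt (fun x ↦ a * x - b / x) (a + b / x ^ 2) x := by
  have h := ((hasDerivAt_id' x).const_mul a).fun_sub ((hasDerivAt_inv hx).const_mul b)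
  simpa only [mul_one, mul_neg, sub_neg_eq_add, ← div_eq_mul_inv] using h

lemma monotoneOn_mul_sub_div (ha : 0 ≤ a) (hb : 0 ≤ b) :
    MonotoneOn (fun x ↦ a * x - b / x) (Ioi 0) := by
  intro x (hx : 0 < x) y _ hxy
  dsimp only
  gcongr

lemma image_mul_sub_div_Ioi (ha : 0 < a) (hb : 0 < b) :
    (fun x ↦ a * x - b / x) '' Ioi 0 = univ := by
  refine eq_univ_of_forall fun y ↦ ?_
  obtain ⟨x, hx, hquad⟩ : ∃ x > 0, a * x ^ 2 = y * x + b := by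
    set r := √(y ^ 2 + 4 * a * b)
    have hr_sq : r ^ 2 = y ^ 2 + 4 * a * b := sq_sqrt (by positivity)
    have hr : |y| < r := lt_sqrt_of_sq_lt (by rw [sq_abs]; linarith [mul_pos ha hb])
    refine ⟨(y + r) / (2 * a), div_pos (by linarith [neg_abs_le y]) (by positivity), ?_⟩
    field_simp
    linear_combination hr_sq
  refine ⟨x, hx, ?_⟩
  dsimp only
  field_simp
  linear_combination hquad

lemma integral_eq_integral_Ioi_deriv_smul_comp_mul_sub_div (ha : 0 < a) (hb : 0 < b) (f : ℝ → E) :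
    ∫ y, f y = ∫ x in Ioi 0, (a + b / x ^ 2) • f (a * x - b / x) := by
  rw [← integral_image_eq_integral_deriv_smul_of_monotoneOn measurableSet_Ioi
    (fun x hx ↦ (hasDerivAt_mul_sub_div a b (ne_of_gt hx)).hasDerivWithinAt)
    (monotoneOn_mul_sub_div ha.le hb.le), image_mul_sub_div_Ioi ha hb, setIntegral_univ]

lemma integrable_iff_integrableOn_deriv_smul_comp_mul_sub_div (ha : 0 < a) (hb : 0 < b)
    {f : ℝ → E} :
    Integrable f ↔ IntegrableOn (fun x ↦ (a + b / x ^ 2) • f (a * x - b / x)) (Ioi 0) := by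
  rw [← integrableOn_image_iff_integrableOn_deriv_smul_of_monotoneOn measurableSet_Ioi
    (fun x hx ↦ (hasDerivAt_mul_sub_div a b (ne_of_gt hx)).hasDerivWithinAt)
    (monotoneOn_mul_sub_div ha.le hb.le), image_mul_sub_div_Ioi ha hb, integrableOn_univ]

lemma integrableOn_comp_mul_sub_div (ha : 0 < a) (hb : 0 < b) {f : ℝ → E} (hf : Integrable f) :
    IntegrableOn (fun x ↦ f (a * x - b / x)) (Ioi 0) := by
  have hbound : ∀ x : ℝ, ‖(a + b / x ^ 2)⁻¹‖ ≤ a⁻¹ := fun x ↦ by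
    have : 0 ≤ b / x ^ 2 := by positivity
    rw [norm_of_nonneg (by positivity)]
    gcongr
    linarith
  have hmeas : Measurable fun x : ℝ ↦ (a + b / x ^ 2)⁻¹ := by fun_prop
  have hint := (integrable_iff_integrableOn_deriv_smul_comp_mul_sub_div ha hb).1 hf
  refine (hint.bdd_smul a⁻¹ hmeas.aestronglyMeasurable (.of_forall hbound)).congr
    (.of_forall fun x ↦ ?_)
  exact inv_smul_smul₀ (by positivity) _

lemma integral_Ioi_div_sq_smul_comp_div (g : ℝ → E) {k : ℝ} (hk : 0 < k) :
    ∫ x in Ioi 0, (k / x ^ 2) • g (k / x) = ∫ x in Ioi 0, g x := by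
  calc ∫ x in Ioi 0, (k / x ^ 2) • g (k / x)
      = ∫ x in Ioi 0, (|(-1 : ℝ)| * x ^ (-1 - 1 : ℝ)) • (k • g (k * x ^ (-1 : ℝ))) := by
        refine setIntegral_congr_fun measurableSet_Ioi fun x (hx : 0 < x) ↦ ?_
        have hsq : x ^ (-1 - 1 : ℝ) = (x ^ 2)⁻¹ := by
          rw [← rpow_natCast, ← rpow_neg hx.le]
          norm_num
        simp only [hsq, rpow_neg_one, abs_neg, abs_one, one_mul, smul_smul, div_eq_mul_inv,
          mul_comm k]
    _ = ∫ x in Ioi 0, k • g (k * x) :=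
        integral_comp_rpow_Ioi (fun x ↦ k • g (k * x)) (by norm_num)
    _ = ∫ x in Ioi 0, g x := by
        rw [integral_smul, integral_comp_mul_left_Ioi' g 0 hk, mul_zero]

lemma integral_Ioi_div_sq_smul_comp_mul_sub_div (ha : 0 < a) (hb : 0 < b) (f : ℝ → E) :
    ∫ x in Ioi 0, (b / x ^ 2) • f (a * x - b / x) = a • ∫ x in Ioi 0, f (-(a * x - b / x)) := by
  rw [← integral_Ioi_div_sq_smul_comp_div (fun x ↦ f (-(a * x - b / x))) (div_pos hb ha),
    ← integral_smul]
  refine setIntegral_congr_fun measurableSet_Ioi fun x (hx : 0 < x) ↦ ?_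
  have hflip : -(a * (b / a / x) - b / (b / a / x)) = a * x - b / x := by
    field_simp
    ring
  have hweight : a * (b / a / x ^ 2) = b / x ^ 2 := by field_simp
  simp only [hflip, smul_smul, hweight]

/-- The Cauchy–Schlömilch transformation. -/
theorem integral_eq_two_mul_smul_integral_Ioi_comp_mul_sub_div (ha : 0 < a) (hb : 0 < b)
    {f : ℝ → E} (hf : Integrable f) (heven : Function.Even f) :
    ∫ y, f y = (2 * a) • ∫ x in Ioi 0, f (a * x - b / x) := by
  have hint_const : IntegrableOn (fun x ↦ a • f (a * x - b / x)) (Ioi 0) :=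
    (integrableOn_comp_mul_sub_div ha hb hf).smul a
  have hint_weight : IntegrableOn (fun x ↦ (b / x ^ 2) • f (a * x - b / x)) (Ioi 0) :=
    (((integrable_iff_integrableOn_deriv_smul_comp_mul_sub_div ha hb).1 hf).sub hint_const).congr
      (.of_forall fun x ↦ by simp [add_smul])
  have hflip := integral_Ioi_div_sq_smul_comp_mul_sub_div ha hb f
  simp only [heven _] at hflip
  calc ∫ y, f y = ∫ x in Ioi 0, (a • f (a * x - b / x) + (b / x ^ 2) • f (a * x - b / x)) := by
        simp only [integral_eq_integral_Ioi_deriv_smul_comp_mul_sub_div ha hb f, add_smul]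
    _ = a • (∫ x in Ioi 0, f (a * x - b / x)) + a • ∫ x in Ioi 0, f (a * x - b / x) := by
        rw [integral_add hint_const hint_weight, integral_smul, hflip]
    _ = (2 * a) • ∫ x in Ioi 0, f (a * x - b / x) := by rw [← add_smul, two_mul]

end CauchySchlomilch

section Gaussian

open Set

lemma integral_Ioi_exp_neg_mul_sq_add_div_sq {p q : ℝ} (hp : 0 < p) (hq : 0 < q) :
    ∫ x in Ioi 0, exp (-(p * x ^ 2 + q / x ^ 2)) = √(π / p) / 2 * exp (-2 * √(p * q)) := by
  have hsquare : ∀ x ∈ Ioi (0 : ℝ), exp (-(p * x ^ 2 + q / x ^ 2)) =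
      exp (-1 * (√p * x - √q / x) ^ 2) * exp (-2 * √(p * q)) := fun x (hx : 0 < x) ↦ by
    rw [← exp_add, sqrt_mul hp.le]
    congr 1
    field_simp
    linear_combination x ^ 4 * sq_sqrt hp.le + sq_sqrt hq.le
  have hgauss := integral_eq_two_mul_smul_integral_Ioi_comp_mul_sub_div (sqrt_pos.2 hp)
    (sqrt_pos.2 hq) (integrable_exp_neg_mul_sq one_pos) fun y ↦ by rw [neg_sq]
  rw [integral_gaussian, div_one, smul_eq_mul] at hgauss
  rw [setIntegral_congr_fun measurableSet_Ioi hsquare, integral_mul_const, sqrt_div pi_pos.le,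
    hgauss]
  field_simp

lemma integral_Ioi_rpow_neg_half_smul {E : Type*} [NormedAddCommGroup E] [NormedSpace ℝ E]
    (g : ℝ → E) :
    ∫ s in Ioi (0 : ℝ), s ^ (-(1 : ℝ) / 2) • g s = (2 : ℝ) • ∫ x in Ioi (0 : ℝ), g (x ^ 2) := by
  rw [← integral_comp_rpow_Ioi_of_pos (g := fun s ↦ s ^ (-(1 : ℝ) / 2) • g s) two_pos,
    ← integral_smul]
  refine setIntegral_congr_fun measurableSet_Ioi fun x (hx : 0 < x) ↦ ?_
  have hjac : 2 * x ^ (2 - 1 : ℝ) * (x ^ (2 : ℝ)) ^ (-(1 : ℝ) / 2) = 2 := by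
    rw [← rpow_mul hx.le, mul_assoc, ← rpow_add hx]
    norm_num
  rw [smul_smul, hjac, rpow_two]

lemma integral_Ioi_rpow_neg_half_mul_exp {p q : ℝ} (hp : 0 < p) (hq : 0 < q) :
    ∫ s in Ioi 0, s ^ (-(1 : ℝ) / 2) * exp (-(p * s + q / s)) =
      √(π / p) * exp (-2 * √(p * q)) := by
  have hsubst := integral_Ioi_rpow_neg_half_smul fun s ↦ exp (-(p * s + q / s))
  simp only [smul_eq_mul] at hsubst
  rw [hsubst, integral_Ioi_exp_neg_mul_sq_add_div_sq hp hq]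
  ring

end Gaussian

/-- Explicit evaluation, in the Brownian case, of the infinite-horizon supremum formula:
`(c/√(2π)) · ∫₀^∞ s^(-1/2) · exp(−(u + c·s)²/(2s)) ds = exp(−2·u·c)`. -/
theorem brownian_infinite_horizon_integral (u c : ℝ) (hu : 0 < u) (hc : 0 < c) :
    c / Real.sqrt (2 * Real.pi) *
      ∫ s in Set.Ioi (0 : ℝ), s ^ (-(1 : ℝ) / 2) * Real.exp (-(u + c * s) ^ 2 / (2 * s)) =
    Real.exp (-2 * u * c) := by
  have hexpand : ∀ s ∈ Set.Ioi (0 : ℝ), s ^ (-(1 : ℝ) / 2) * exp (-(u + c * s) ^ 2 / (2 * s)) =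
      s ^ (-(1 : ℝ) / 2) * exp (-(c ^ 2 / 2 * s + u ^ 2 / 2 / s)) * exp (-u * c) :=
    fun s (hs : 0 < s) ↦ by
      rw [mul_assoc, ← exp_add]
      congr 2
      field_simp
      ring
  have hsqrt : √(c ^ 2 / 2 * (u ^ 2 / 2)) = u * c / 2 := by
    rw [show c ^ 2 / 2 * (u ^ 2 / 2) = (u * c / 2) ^ 2 by ring, sqrt_sq (by positivity)]
  have hconst : √(π / (c ^ 2 / 2)) = √(2 * π) / c := by
    rw [show π / (c ^ 2 / 2) = 2 * π / c ^ 2 by field_simp, sqrt_div (by positivity), sqrt_sq hc.le]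
  have hexp : exp (-2 * (u * c / 2)) * exp (-u * c) = exp (-2 * u * c) := by
    rw [← exp_add]
    ring_nf
  rw [setIntegral_congr_fun measurableSet_Ioi hexpand, integral_mul_const,
    integral_Ioi_rpow_neg_half_mul_exp (by positivity) (by positivity), hsqrt, hconst, ← hexp]
  field_simp
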